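/- arXiv:2507.09846 — 7 statements merged into one kernel-verified Lean document; each statement's English description precedes it below -/
import Mathlib

section
/- Consider the SF iteration with arbitrary update directions Δ_t ∈ ℝⁿ, learning rate γ > 0, momentum β ∈ [0,1), and coefficients c_t. Define the momentum variable m_t := (x_t - z_{t+1})/γ for t ≥ 1 and m₀ := 0. Then for every t ≥ 1: (i) m_t = (1 - c_t) m_{t-1} + Δ_t, and (ii) y_{t+1} = y_t - γ[β c_{t+1} m_t + (1-β) Δ_t]. That is, the SF iteration is equivalent to a momentum-based optimizer update on the y_t iterates. -/
/-!
Averaging contracts the gap between the two sequences: `x (t+1) - z (t+1)` is `1 - c (t+1)` times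
`x t - z (t+1)`, which is `γ • m t`. The gradient step lengthens this gap by `γ • Δ (t+1)`, whence
the recursion for `m`. The same gap drives `x (t+1) - x t = -c (t+1) • (x t - z (t+1))`, and mixing
this with `z (t+1) - z t = -γ • Δ t` in proportion `β : 1 - β` gives the update of `y`.
-/

/-- The Schedule-Free iteration with learning rate `γ`, momentum parameter `β`, averaging
coefficients `c` and update directions `Δ`. As in the paper, time starts at `1`, so the values at
`0` are unconstrained. -/
structure IsScheduleFree {R V : Type*} [CommRing R] [AddCommGroup V] [Module R V]
    (Δ : ℕ → V) (γ β : R) (c : ℕ → R) (x y z : ℕ → V) : Prop where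
  z_one : z 1 = x 1
  y_eq : ∀ t, 1 ≤ t → y t = (1 - β) • z t + β • x t
  z_succ : ∀ t, 1 ≤ t → z (t + 1) = z t - γ • Δ t
  x_succ : ∀ t, 1 ≤ t → x (t + 1) = (1 - c (t + 1)) • x t + c (t + 1) • z (t + 1)

namespace IsScheduleFree

variable {R V : Type*} [CommRing R] [AddCommGroup V] [Module R V]
  {Δ : ℕ → V} {γ β : R} {c : ℕ → R} {x y z m : ℕ → V} {t : ℕ}

theorem x_succ_sub_z_succ (h : IsScheduleFree Δ γ β c x y z) (ht : 1 ≤ t) :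
    x (t + 1) - z (t + 1) = (1 - c (t + 1)) • (x t - z (t + 1)) := by
  rw [h.x_succ t ht]
  module

theorem x_succ_sub_x (h : IsScheduleFree Δ γ β c x y z) (ht : 1 ≤ t) :
    x (t + 1) - x t = -(c (t + 1) • (x t - z (t + 1))) := by
  rw [h.x_succ t ht]
  module

theorem x_sub_z_succ (h : IsScheduleFree Δ γ β c x y z) (ht : 1 ≤ t) :
    x t - z (t + 1) = (x t - z t) + γ • Δ t := by
  rw [h.z_succ t ht]
  abel

theorem y_succ (h : IsScheduleFree Δ γ β c x y z) (ht : 1 ≤ t) :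
    y (t + 1) = y t - ((β * c (t + 1)) • (x t - z (t + 1)) + (1 - β) • γ • Δ t) :=
  calc
    y (t + 1) = y t + ((1 - β) • (z (t + 1) - z t) + β • (x (t + 1) - x t)) := by
      rw [h.y_eq (t + 1) t.succ_pos, h.y_eq t ht]
      module
    _ = y t - ((β * c (t + 1)) • (x t - z (t + 1)) + (1 - β) • γ • Δ t) := by
      rw [h.x_succ_sub_x ht, h.z_succ t ht]
      module

theorem x_succ_sub_z_succ_eq_smul_momentum (h : IsScheduleFree Δ γ β c x y z) (hm0 : m 0 = 0)
    (hm : ∀ t, 1 ≤ t → γ • m t = x t - z (t + 1)) (t : ℕ) :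
    x (t + 1) - z (t + 1) = (1 - c (t + 1)) • γ • m t := by
  rcases t.eq_zero_or_pos with rfl | ht
  · simp [hm0, h.z_one]
  · rw [h.x_succ_sub_z_succ ht, hm t ht]

theorem momentum_succ (h : IsScheduleFree Δ γ β c x y z) (hγ : IsSMulRegular V γ) (hm0 : m 0 = 0)
    (hm : ∀ t, 1 ≤ t → γ • m t = x t - z (t + 1)) (t : ℕ) :
    m (t + 1) = (1 - c (t + 1)) • m t + Δ (t + 1) := by
  apply hγ
  calc
    γ • m (t + 1) = x (t + 1) - z (t + 1) + γ • Δ (t + 1) := by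
      rw [hm (t + 1) t.succ_pos, h.x_sub_z_succ t.succ_pos]
    _ = (1 - c (t + 1)) • γ • m t + γ • Δ (t + 1) := by
      rw [h.x_succ_sub_z_succ_eq_smul_momentum hm0 hm]
    _ = γ • ((1 - c (t + 1)) • m t + Δ (t + 1)) := by
      rw [smul_add, smul_comm]

theorem y_succ_eq_sub_momentum (h : IsScheduleFree Δ γ β c x y z) (ht : 1 ≤ t)
    (hm : γ • m t = x t - z (t + 1)) :
    y (t + 1) = y t - γ • ((β * c (t + 1)) • m t + (1 - β) • Δ t) := by
  rw [h.y_succ ht, ← hm, smul_add, smul_comm γ, smul_comm γ]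

end IsScheduleFree

theorem sf_momentum_reformulation_general
    {R V : Type*} [CommRing R] [AddCommGroup V] [Module R V]
    {Δ : ℕ → V} {γ β : R} {c : ℕ → R} {x y z m : ℕ → V}
    (hγ : IsSMulRegular V γ) (h : IsScheduleFree Δ γ β c x y z) (hm0 : m 0 = 0)
    (hm : ∀ t, 1 ≤ t → γ • m t = x t - z (t + 1)) (t : ℕ) (ht : 1 ≤ t) :
    m t = (1 - c t) • m (t - 1) + Δ t ∧
      y (t + 1) = y t - γ • ((β * c (t + 1)) • m t + (1 - β) • Δ t) := by
  refine ⟨?_, h.y_succ_eq_sub_momentum ht (hm t ht)⟩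
  obtain ⟨k, rfl⟩ := Nat.exists_eq_add_of_le' ht
  exact h.momentum_succ hγ hm0 hm k

theorem sf_momentum_reformulation
    {n : ℕ} (Δ : ℕ → Fin n → ℝ)
    (γ β : ℝ) (hγ : 0 < γ) (hβ : β ∈ Set.Ico (0 : ℝ) 1)
    (c : ℕ → ℝ) (hc : ∀ t : ℕ, 1 ≤ t → c t ∈ Set.Ioc (0 : ℝ) 1) (hc1 : c 1 = 1)
    (x y z : ℕ → Fin n → ℝ)
    (hz1 : z 1 = x 1)
    (hy : ∀ t : ℕ, 1 ≤ t → y t = (1 - β) • z t + β • x t)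
    (hz : ∀ t : ℕ, 1 ≤ t → z (t + 1) = z t - γ • Δ t)
    (hx : ∀ t : ℕ, 1 ≤ t →
      x (t + 1) = (1 - c (t + 1)) • x t + c (t + 1) • z (t + 1))
    -- the momentum variable m_t = (x_t - z_{t+1})/γ, with m₀ = 0
    (m : ℕ → Fin n → ℝ)
    (hm0 : m 0 = 0)
    (hm : ∀ t : ℕ, 1 ≤ t → m t = γ⁻¹ • (x t - z (t + 1))) :
    ∀ t : ℕ, 1 ≤ t →
      m t = (1 - c t) • m (t - 1) + Δ t ∧
      y (t + 1) = y t - γ • ((β * c (t + 1)) • m t + (1 - β) • Δ t) :=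
  sf_momentum_reformulation_general (IsSMulRegular.of_ne_zero hγ.ne') ⟨hz1, hy, hz, hx⟩ hm0
    fun t ht ↦ by rw [hm t ht, smul_inv_smul₀ hγ.ne']
end

section
/- Consider the SF iteration with arbitrary update directions Δ_t ∈ ℝⁿ, learning rate γ > 0, momentum β ∈ [0,1), and coefficients c_t ∈ (0,1]. Then for every t ≥ 1, the averaged iterate satisfies x_{t+1} = [(1 - c_{t+1})(1-β) x_t + c_{t+1} y_{t+1}] / [(1 - c_{t+1})(1-β) + c_{t+1}]; in particular, x_{t+1} is a convex combination of x_t and y_{t+1}. -/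
/-!
STATEMENT 5: The SF averaged iterate satisfies
x_{t+1} = [(1 - c_{t+1})(1-β) x_t + c_{t+1} y_{t+1}] / [(1 - c_{t+1})(1-β) + c_{t+1}];
in particular, x_{t+1} is a convex combination of x_t and y_{t+1}.
-/

-- The weights come from eliminating `z`: the `x`-update scaled by `1 - β` and the `y`-update scaled
-- by `c` contain `z` with the same coefficient `c * (1 - β)`.
theorem sf_smul_average_eq {R E : Type*} [CommRing R] [AddCommGroup E] [Module R E]
    {β c : R} {x x' y z : E} (hy : y = (1 - β) • z + β • x') (hx : x' = (1 - c) • x + c • z) :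
    ((1 - c) * (1 - β) + c) • x' = ((1 - c) * (1 - β)) • x + c • y :=
  calc
    ((1 - c) * (1 - β) + c) • x' = (1 - β) • x' + (c * β) • x' := by module
    _ = (1 - β) • ((1 - c) • x + c • z) + (c * β) • x' := by rw [← hx]
    _ = ((1 - c) * (1 - β)) • x + c • ((1 - β) • z + β • x') := by module
    _ = ((1 - c) * (1 - β)) • x + c • y := by rw [← hy]

theorem eq_div_smul_add_div_smul_of_add_smul_eq {K E : Type*} [Semifield K] [AddCommMonoid E]
    [Module K E] {a b : K} {u v w : E} (hab : a + b ≠ 0) (h : (a + b) • w = a • u + b • v) :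
    w = (a / (a + b)) • u + (b / (a + b)) • v :=
  calc
    w = (a + b)⁻¹ • (a • u + b • v) := (eq_inv_smul_iff₀ hab).2 h
    _ = (a / (a + b)) • u + (b / (a + b)) • v := by
      rw [smul_add, smul_smul, smul_smul, inv_mul_eq_div, inv_mul_eq_div]

theorem sf_x_convex_combination_of_y_general {K E : Type*} [Field K] [LinearOrder K]
    [IsStrictOrderedRing K] [AddCommGroup E] [Module K E] {β c : K} {x x' y z : E}
    (hβ : β ≤ 1) (hc : c ∈ Set.Ioc 0 1)
    (hy : y = (1 - β) • z + β • x') (hx : x' = (1 - c) • x + c • z) :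
    x' = (((1 - c) * (1 - β)) / ((1 - c) * (1 - β) + c)) • x
        + (c / ((1 - c) * (1 - β) + c)) • y ∧
      0 ≤ ((1 - c) * (1 - β)) / ((1 - c) * (1 - β) + c) ∧
      0 ≤ c / ((1 - c) * (1 - β) + c) ∧
      ((1 - c) * (1 - β)) / ((1 - c) * (1 - β) + c) + c / ((1 - c) * (1 - β) + c) = 1 := by
  have weight_nonneg : 0 ≤ (1 - c) * (1 - β) :=
    mul_nonneg (sub_nonneg.2 hc.2) (sub_nonneg.2 hβ)
  have total_pos : 0 < (1 - c) * (1 - β) + c := add_pos_of_nonneg_of_pos weight_nonneg hc.1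
  exact ⟨eq_div_smul_add_div_smul_of_add_smul_eq total_pos.ne' (sf_smul_average_eq hy hx),
    div_nonneg weight_nonneg total_pos.le, div_nonneg hc.1.le total_pos.le,
    by rw [← add_div, div_self total_pos.ne']⟩

theorem sf_x_convex_combination_of_y
    {n : ℕ} (Δ : ℕ → Fin n → ℝ)
    (γ β : ℝ) (hγ : 0 < γ) (hβ : β ∈ Set.Ico (0 : ℝ) 1)
    (c : ℕ → ℝ) (hc : ∀ t : ℕ, 1 ≤ t → c t ∈ Set.Ioc (0 : ℝ) 1) (hc1 : c 1 = 1)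
    (x y z : ℕ → Fin n → ℝ)
    (hz1 : z 1 = x 1)
    (hy : ∀ t : ℕ, 1 ≤ t → y t = (1 - β) • z t + β • x t)
    (hz : ∀ t : ℕ, 1 ≤ t → z (t + 1) = z t - γ • Δ t)
    (hx : ∀ t : ℕ, 1 ≤ t →
      x (t + 1) = (1 - c (t + 1)) • x t + c (t + 1) • z (t + 1)) :
    ∀ t : ℕ, 1 ≤ t →
      x (t + 1) =
        (((1 - c (t + 1)) * (1 - β)) / ((1 - c (t + 1)) * (1 - β) + c (t + 1))) • x t
        + (c (t + 1) / ((1 - c (t + 1)) * (1 - β) + c (t + 1))) • y (t + 1) ∧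
      0 ≤ ((1 - c (t + 1)) * (1 - β)) / ((1 - c (t + 1)) * (1 - β) + c (t + 1)) ∧
      0 ≤ c (t + 1) / ((1 - c (t + 1)) * (1 - β) + c (t + 1)) ∧
      ((1 - c (t + 1)) * (1 - β)) / ((1 - c (t + 1)) * (1 - β) + c (t + 1))
        + c (t + 1) / ((1 - c (t + 1)) * (1 - β) + c (t + 1)) = 1 := by
  intro t ht
  have ht' : 1 ≤ t + 1 := Nat.le_add_left 1 t
  exact sf_x_convex_combination_of_y_general hβ.2.le (hc _ ht') (hy _ ht') (hx t ht)
end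

section
/- Run SF-GD on the quadratic f(w) = (1/2) wᵀHw + gᵀw + c (H real symmetric) with learning rate γ > 0, momentum β ∈ [0,1), and coefficients c_t ∈ (0,1]. Let (q, a) be an eigenvector/eigenvalue pair of H with a ≠ 0, and define the scalar sequence x̃_t := qᵀx_t + (1/a) qᵀg. Then for every t ≥ 2, x̃_{t+1} = [1 + c_{t+1}/c_t - c_{t+1} - γ c_{t+1}((1-β)/c_t + β) a] x̃_t + [c_{t+1} - c_{t+1}/c_t][1 - γ(1-β)a] x̃_{t-1}; that is, the projection of the SF-GD trajectory onto an eigendirection of H obeys a linear time-varying second-order recurrence. -/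
/-!
STATEMENT 8: Projection of the SF-GD trajectory onto an eigendirection of H
obeys a linear time-varying second-order recurrence: with (q, a) an
eigenvector/eigenvalue pair of H (a ≠ 0) and x̃_t := qᵀx_t + (1/a) qᵀg,
for every t ≥ 2,
x̃_{t+1} = [1 + c_{t+1}/c_t - c_{t+1} - γ c_{t+1}((1-β)/c_t + β) a] x̃_t
         + [c_{t+1} - c_{t+1}/c_t][1 - γ(1-β)a] x̃_{t-1}.
-/

open Matrix

/-!
The relations defining the Schedule-Free iteration are preserved by linear maps and by translations.
Applying `qᵀ` and then translating by `a⁻¹ qᵀg`, which moves the zero of the projected gradient to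
the origin, turns the SF-GD run into a scalar run with direction `a ỹ_t`. Since `c_t ≠ 0`, the
averaging step recovers `z̃_t` from `x̃_t` and `x̃_{t-1}`; substituting this into the next step
leaves a recurrence in `x̃` alone.
-/

variable {R V W : Type*}

/-- The Schedule-Free iteration with learning rate `γ`, momentum `β`, averaging coefficients `c` and
update directions `Δ`, run from time `1`. Only the update rules are recorded: the parameters are
arbitrary scalars and the run may start from any pair `x 1`, `z 1`. -/
structure IsScheduleFree_s8 [Ring R] [AddCommGroup V] [Module R V]
    (γ β : R) (c : ℕ → R) (Δ x y z : ℕ → V) : Prop where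
  y_eq : ∀ t, 1 ≤ t → y t = (1 - β) • z t + β • x t
  z_succ : ∀ t, 1 ≤ t → z (t + 1) = z t - γ • Δ t
  x_succ : ∀ t, 1 ≤ t → x (t + 1) = (1 - c (t + 1)) • x t + c (t + 1) • z (t + 1)

namespace IsScheduleFree_s8

section Ring

variable [Ring R] [AddCommGroup V] [Module R V] [AddCommGroup W] [Module R W]
  {γ β : R} {c : ℕ → R} {Δ x y z : ℕ → V}

theorem map (h : IsScheduleFree_s8 γ β c Δ x y z) (φ : V →ₗ[R] W) :
    IsScheduleFree_s8 γ β c (fun t ↦ φ (Δ t)) (fun t ↦ φ (x t)) (fun t ↦ φ (y t))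
      (fun t ↦ φ (z t)) where
  y_eq t ht := by simp only [h.y_eq t ht, map_add, map_smul]
  z_succ t ht := by simp only [h.z_succ t ht, map_sub, map_smul]
  x_succ t ht := by simp only [h.x_succ t ht, map_add, map_smul]

theorem add_const (h : IsScheduleFree_s8 γ β c Δ x y z) (v : V) :
    IsScheduleFree_s8 γ β c Δ (fun t ↦ x t + v) (fun t ↦ y t + v) (fun t ↦ z t + v) where
  y_eq t ht := by
    simp only [h.y_eq t ht, smul_add, sub_smul, one_smul]
    abel
  z_succ t ht := by
    simp only [h.z_succ t ht]
    abel
  x_succ t ht := by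
    simp only [h.x_succ t ht, smul_add, sub_smul, one_smul]
    abel

end Ring

section Field

variable [Field R] [AddCommGroup V] [Module R V] {γ β : R} {c : ℕ → R} {x y z : ℕ → V}

theorem z_succ_eq_inv_smul {Δ : ℕ → V} (h : IsScheduleFree_s8 γ β c Δ x y z) {t : ℕ} (ht : 1 ≤ t)
    (hc : c (t + 1) ≠ 0) :
    z (t + 1) = (c (t + 1))⁻¹ • (x (t + 1) - (1 - c (t + 1)) • x t) := by
  rw [h.x_succ t ht, add_sub_cancel_left, inv_smul_smul₀ hc]

theorem x_add_two_of_direction_eq_smul {a : R}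
    (h : IsScheduleFree_s8 γ β c (fun t ↦ a • y t) x y z) {t : ℕ} (ht : 1 ≤ t)
    (hc : c (t + 1) ≠ 0) :
    x (t + 2) =
      (1 + c (t + 2) / c (t + 1) - c (t + 2)
        - γ * c (t + 2) * ((1 - β) / c (t + 1) + β) * a) • x (t + 1)
      + ((c (t + 2) - c (t + 2) / c (t + 1)) * (1 - γ * (1 - β) * a)) • x t := by
  have z_add_two : z (t + 2) = (1 - γ * (1 - β) * a) • z (t + 1) - (γ * β * a) • x (t + 1) := by
    rw [h.z_succ (t + 1) (by omega), h.y_eq (t + 1) (by omega)]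
    module
  rw [h.x_succ (t + 1) (by omega), z_add_two, h.z_succ_eq_inv_smul ht hc]
  match_scalars <;> field_simp <;> ring

end Field

end IsScheduleFree_s8

theorem dotProduct_mulVec_of_isSymm_of_mulVec_eq_smul {ι : Type*} [Fintype ι] [CommSemiring R]
    {H : Matrix ι ι R} (hH : H.IsSymm) {q : ι → R} {a : R} (heig : H *ᵥ q = a • q) (v : ι → R) :
    q ⬝ᵥ H *ᵥ v = a • (q ⬝ᵥ v) := by
  rw [dotProduct_mulVec, ← mulVec_transpose, hH.eq, heig, smul_dotProduct]

theorem sfgd_eigendirection_recurrence_general [Field R] [AddCommGroup V] [Module R V]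
    [AddCommGroup W] [Module R W] {A : Module.End R V} {b : V} {γ β : R} {c : ℕ → R}
    {x y z : ℕ → V} (h : IsScheduleFree_s8 γ β c (fun t ↦ A (y t) + b) x y z)
    {φ : V →ₗ[R] W} {a : R} (ha : a ≠ 0) (hφ : ∀ v, φ (A v) = a • φ v)
    {xtil : ℕ → W} (hxtil : ∀ t, xtil t = φ (x t) + a⁻¹ • φ b)
    {t : ℕ} (ht : 1 ≤ t) (hc : c (t + 1) ≠ 0) :
    xtil (t + 2) =
      (1 + c (t + 2) / c (t + 1) - c (t + 2)
        - γ * c (t + 2) * ((1 - β) / c (t + 1) + β) * a) • xtil (t + 1)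
      + ((c (t + 2) - c (t + 2) / c (t + 1)) * (1 - γ * (1 - β) * a)) • xtil t := by
  have direction_eq (t : ℕ) : φ (A (y t) + b) = a • (φ (y t) + a⁻¹ • φ b) := by
    rw [map_add, hφ, smul_add, smul_inv_smul₀ ha]
  have projected := (h.map φ).add_const (a⁻¹ • φ b)
  simp only [direction_eq, ← hxtil] at projected
  exact projected.x_add_two_of_direction_eq_smul ht hc

theorem sfgd_eigendirection_recurrence
    {n : ℕ} (H : Matrix (Fin n) (Fin n) ℝ) (hH : H.IsSymm)
    (g : Fin n → ℝ) (c₀ : ℝ)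
    (f : (Fin n → ℝ) → ℝ)
    (hf : ∀ w, f w = (1 / 2) * (w ⬝ᵥ H.mulVec w) + g ⬝ᵥ w + c₀)
    (γ β : ℝ) (hγ : 0 < γ) (hβ : β ∈ Set.Ico (0 : ℝ) 1)
    (c : ℕ → ℝ) (hc : ∀ t : ℕ, 1 ≤ t → c t ∈ Set.Ioc (0 : ℝ) 1) (hc1 : c 1 = 1)
    (x y z : ℕ → Fin n → ℝ)
    (hz1 : z 1 = x 1)
    (hy : ∀ t : ℕ, 1 ≤ t → y t = (1 - β) • z t + β • x t)
    -- SF-GD: Δ_t = ∇f(y_t) = H y_t + g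
    (hz : ∀ t : ℕ, 1 ≤ t → z (t + 1) = z t - γ • (H.mulVec (y t) + g))
    (hx : ∀ t : ℕ, 1 ≤ t →
      x (t + 1) = (1 - c (t + 1)) • x t + c (t + 1) • z (t + 1))
    -- (q, a): an eigenvector/eigenvalue pair of H with a ≠ 0
    (q : Fin n → ℝ) (a : ℝ) (hq : q ≠ 0) (ha : a ≠ 0)
    (heig : H.mulVec q = a • q)
    -- the projected scalar sequence x̃_t = qᵀ x_t + (1/a) qᵀ g
    (xtil : ℕ → ℝ)
    (hxtil : ∀ t : ℕ, xtil t = q ⬝ᵥ x t + (1 / a) * (q ⬝ᵥ g)) :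
    ∀ t : ℕ, 2 ≤ t →
      xtil (t + 1) =
        (1 + c (t + 1) / c t - c (t + 1)
          - γ * c (t + 1) * ((1 - β) / c t + β) * a) * xtil t
        + (c (t + 1) - c (t + 1) / c t) * (1 - γ * (1 - β) * a) * xtil (t - 1) := by
  intro t ht
  obtain ⟨s, hs, rfl⟩ : ∃ s, 1 ≤ s ∧ t = s + 1 := ⟨t - 1, by omega, by omega⟩
  exact sfgd_eigendirection_recurrence_general (A := H.mulVecLin) (φ := dotProductBilin ℝ ℝ q)
    ⟨hy, hz, hx⟩ ha (dotProduct_mulVec_of_isSymm_of_mulVec_eq_smul hH heig)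
    (by simpa using hxtil) hs (hc (s + 1) (by omega)).1.ne'
end

section
/- Let S > 0, γ > 0, β₁ ∈ [0,1), β₂ ∈ (0,1), and let g, n ∈ ℝⁿ. Set ν := ((1-β₁)γS/2)² (so that S/√ν = 2/((1-β₁)γ)) and define σ² := [⟨n, -g⟩ + ((1-β₂)/β₂)(S²/4 - ‖g‖²/((1-β₁)²γ²))] / [(1/2)‖n‖² + ((1-β₂)/((1-β₁)²β₂γ²))S²]. Then the denominator is strictly positive and σ² is the unique real number satisfying the stationarity equation (1/√ν)⟨n, -(γ(1-β₁)/√ν)(g + (σ²/2) n)⟩ - (S/(2ν^{3/2})) · ((1-β₂)/β₂)(‖g‖² + σ² S² - ν) = 0. -/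
/-!
STATEMENT 13: Equilibrium oscillation variance of the central flow of
Schedule-Free Scalar Adam at the Edge of Stability. With
ν := ((1-β₁)γS/2)² (so S/√ν = 2/((1-β₁)γ)) and
σ² := [⟨n,-g⟩ + ((1-β₂)/β₂)(S²/4 - ‖g‖²/((1-β₁)²γ²))]
      / [(1/2)‖n‖² + ((1-β₂)/((1-β₁)²β₂γ²))S²],
the denominator is strictly positive and σ² is the unique real number satisfying
(1/√ν)⟨n, -(γ(1-β₁)/√ν)(g + (σ²/2) n)⟩
  - (S/(2ν^{3/2})) ((1-β₂)/β₂)(‖g‖² + σ² S² - ν) = 0.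
-/

open RealInnerProductSpace

/-!
With `a = γ (1 - β₁)` and `κ = (1 - β₂) / β₂`, the left-hand side of the stationarity equation is
affine in the oscillation variance `v`: it equals `a / ν * (drive - v * damping)`. The coefficients
see the sharpness only through `S ^ 2` and the ratio `S / √ν`, so the Edge-of-Stability ansatz
`S / √ν = 2 / a` turns them into the closed forms of the theorem, and `0 < damping` gives exactly
one root.
-/

section CentralFlow

variable {E : Type*} [SeminormedAddCommGroup E] {a κ S ν : ℝ}

/-- The Edge-of-Stability ansatz: the preconditioned sharpness `S / √ν` sits at the critical
threshold of Schedule-Free Scalar Adam, where `a` stands for `γ (1 - β₁)`. -/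
def IsEdgeOfStability (a S ν : ℝ) : Prop :=
  S / √ν = 2 / a

/-- The decrease of the preconditioned sharpness per unit of oscillation variance along the central
flow, in units of `a / ν`. Here `n = ∇S(y)`, while `a` stands for `γ (1 - β₁)` and `κ` for
`(1 - β₂) / β₂`. -/
noncomputable def oscillationDamping (a κ S ν : ℝ) (n : E) : ℝ :=
  1 / 2 * ‖n‖ ^ 2 + κ / (2 * a) * (S / √ν) * S ^ 2

namespace IsEdgeOfStability

theorem of_eq_sq (ha : 0 < a) (hS : 0 < S) (hν : ν = (a * S / 2) ^ 2) :
    IsEdgeOfStability a S ν := by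
  rw [IsEdgeOfStability, hν, Real.sqrt_sq (by positivity)]
  field_simp

theorem sharpness_ne_zero (hedge : IsEdgeOfStability a S ν) (ha : a ≠ 0) : S ≠ 0 :=
  (div_ne_zero_iff.1 (ne_of_eq_of_ne hedge (div_ne_zero two_ne_zero ha))).1

theorem preconditioner_pos (hedge : IsEdgeOfStability a S ν) (ha : a ≠ 0) : 0 < ν :=
  Real.sqrt_ne_zero'.1
    (div_ne_zero_iff.1 (ne_of_eq_of_ne hedge (div_ne_zero two_ne_zero ha))).2

theorem preconditioner_div_sq (hedge : IsEdgeOfStability a S ν) (ha : a ≠ 0) :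
    ν / a ^ 2 = S ^ 2 / 4 := by
  have hν : 0 < ν := hedge.preconditioner_pos ha
  have hS : S = 2 / a * √ν := (div_eq_iff (Real.sqrt_pos.2 hν).ne').1 hedge
  rw [hS, mul_pow, Real.sq_sqrt hν.le]
  ring

theorem oscillationDamping_eq (hedge : IsEdgeOfStability a S ν) (n : E) :
    oscillationDamping a κ S ν n = 1 / 2 * ‖n‖ ^ 2 + κ / a ^ 2 * S ^ 2 := by
  rw [oscillationDamping, hedge]
  ring

theorem oscillationDamping_pos (hedge : IsEdgeOfStability a S ν) (ha : a ≠ 0) (hκ : 0 < κ)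
    (n : E) : 0 < oscillationDamping a κ S ν n := by
  have hS : S ≠ 0 := hedge.sharpness_ne_zero ha
  rw [hedge.oscillationDamping_eq]
  positivity

end IsEdgeOfStability

variable [InnerProductSpace ℝ E]

/-- The growth of the preconditioned sharpness along the central flow in the absence of
oscillations, in units of `a / ν`. Here `g = ∇f(y)` and `n = ∇S(y)`, while `a` stands for
`γ (1 - β₁)` and `κ` for `(1 - β₂) / β₂`. -/
noncomputable def sharpeningDrive (a κ S ν : ℝ) (g n : E) : ℝ :=
  ⟪n, -g⟫ + κ / (2 * a) * (S / √ν) * (ν - ‖g‖ ^ 2)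

/-- The time derivative of the preconditioned sharpness `S / √ν` when `y` and `ν` follow the
central flow with oscillation variance `v`, as given by the chain rule. Here `g = ∇f(y)` and
`n = ∇S(y)`, while `a` stands for `γ (1 - β₁)` and `κ` for `(1 - β₂) / β₂`. -/
noncomputable def preconditionedSharpnessRate (a κ S ν : ℝ) (g n : E) (v : ℝ) : ℝ :=
  (1 / √ν) * ⟪n, -((a / √ν) • (g + (v / 2) • n))⟫
    - (S / (2 * √ν ^ 3)) * κ * (‖g‖ ^ 2 + v * S ^ 2 - ν)

theorem IsEdgeOfStability.sharpeningDrive_eq (hedge : IsEdgeOfStability a S ν) (ha : a ≠ 0)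
    (g n : E) :
    sharpeningDrive a κ S ν g n = ⟪n, -g⟫ + κ * (S ^ 2 / 4 - ‖g‖ ^ 2 / a ^ 2) := by
  rw [sharpeningDrive, hedge, ← hedge.preconditioner_div_sq ha]
  ring

theorem preconditionedSharpnessRate_eq (ha : a ≠ 0) (hν : 0 < ν) (g n : E) (v : ℝ) :
    preconditionedSharpnessRate a κ S ν g n v =
      a / ν * (sharpeningDrive a κ S ν g n - v * oscillationDamping a κ S ν n) := by
  have hsqrt : √ν ≠ 0 := (Real.sqrt_pos.2 hν).ne'
  have hsq : ν = √ν ^ 2 := (Real.sq_sqrt hν.le).symm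
  have hinner : ⟪n, -((a / √ν) • (g + (v / 2) • n))⟫ =
      a / √ν * (⟪n, -g⟫ - v / 2 * ‖n‖ ^ 2) := by
    rw [inner_neg_right, inner_smul_right, inner_add_right, inner_smul_right,
      real_inner_self_eq_norm_sq, inner_neg_right]
    ring
  rw [preconditionedSharpnessRate, hinner, sharpeningDrive, oscillationDamping]
  generalize √ν = r at *
  subst hsq
  field_simp
  ring

theorem preconditionedSharpnessRate_eq_zero_iff (ha : a ≠ 0) (hν : 0 < ν) {g n : E}
    (hdamping : oscillationDamping a κ S ν n ≠ 0) {v : ℝ} :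
    preconditionedSharpnessRate a κ S ν g n v = 0 ↔
      v = sharpeningDrive a κ S ν g n / oscillationDamping a κ S ν n := by
  have hscale : a / ν ≠ 0 := div_ne_zero ha hν.ne'
  rw [preconditionedSharpnessRate_eq ha hν, mul_eq_zero_iff_left hscale, sub_eq_zero,
    eq_div_iff hdamping, eq_comm]

theorem sf_scalar_adam_central_flow_variance_general {γ β₁ β₂ : ℝ} (hγ : γ ≠ 0) (hβ₁ : β₁ ≠ 1)
    (hβ₂ : β₂ ∈ Set.Ioo (0 : ℝ) 1) (hedge : IsEdgeOfStability (γ * (1 - β₁)) S ν) (g n : E) :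
    0 < (1 / 2) * ‖n‖ ^ 2 + ((1 - β₂) / ((1 - β₁) ^ 2 * β₂ * γ ^ 2)) * S ^ 2 ∧
    ∀ v : ℝ, preconditionedSharpnessRate (γ * (1 - β₁)) ((1 - β₂) / β₂) S ν g n v = 0 ↔
      v = (⟪n, -g⟫ + ((1 - β₂) / β₂) * (S ^ 2 / 4 - ‖g‖ ^ 2 / ((1 - β₁) ^ 2 * γ ^ 2)))
        / ((1 / 2) * ‖n‖ ^ 2 + ((1 - β₂) / ((1 - β₁) ^ 2 * β₂ * γ ^ 2)) * S ^ 2) := by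
  have ha : γ * (1 - β₁) ≠ 0 := mul_ne_zero hγ (sub_ne_zero.2 hβ₁.symm)
  have hκ : 0 < (1 - β₂) / β₂ := div_pos (sub_pos.2 hβ₂.2) hβ₂.1
  have hsq : (1 - β₁) ^ 2 * γ ^ 2 = (γ * (1 - β₁)) ^ 2 := by ring
  have hcoeff : (1 - β₂) / ((1 - β₁) ^ 2 * β₂ * γ ^ 2) =
      (1 - β₂) / β₂ / (γ * (1 - β₁)) ^ 2 := by
    rw [div_div, ← hsq, mul_right_comm, mul_comm β₂]
  have hdamping := hedge.oscillationDamping_pos ha hκ n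
  rw [hcoeff, hsq, ← hedge.oscillationDamping_eq, ← hedge.sharpeningDrive_eq ha]
  exact ⟨hdamping, fun _ ↦ preconditionedSharpnessRate_eq_zero_iff ha
    (hedge.preconditioner_pos ha) hdamping.ne'⟩

end CentralFlow

theorem sf_scalar_adam_central_flow_variance
    {d : ℕ} (S γ β₁ β₂ : ℝ)
    (hS : 0 < S) (hγ : 0 < γ)
    (hβ₁ : β₁ ∈ Set.Ico (0 : ℝ) 1) (hβ₂ : β₂ ∈ Set.Ioo (0 : ℝ) 1)
    (g nv : EuclideanSpace ℝ (Fin d))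
    (ν : ℝ) (hν : ν = ((1 - β₁) * γ * S / 2) ^ 2)
    (σsq : ℝ)
    (hσsq : σsq =
      (⟪nv, -g⟫ + ((1 - β₂) / β₂) * (S ^ 2 / 4 - ‖g‖ ^ 2 / ((1 - β₁) ^ 2 * γ ^ 2)))
      / ((1 / 2) * ‖nv‖ ^ 2 + ((1 - β₂) / ((1 - β₁) ^ 2 * β₂ * γ ^ 2)) * S ^ 2)) :
    (0 < (1 / 2) * ‖nv‖ ^ 2 + ((1 - β₂) / ((1 - β₁) ^ 2 * β₂ * γ ^ 2)) * S ^ 2) ∧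
    ((1 / Real.sqrt ν) *
        ⟪nv, -((γ * (1 - β₁) / Real.sqrt ν) • (g + (σsq / 2) • nv))⟫
      - (S / (2 * Real.sqrt ν ^ 3)) * ((1 - β₂) / β₂) *
          (‖g‖ ^ 2 + σsq * S ^ 2 - ν) = 0) ∧
    (∀ t : ℝ,
      (1 / Real.sqrt ν) *
          ⟪nv, -((γ * (1 - β₁) / Real.sqrt ν) • (g + (t / 2) • nv))⟫
        - (S / (2 * Real.sqrt ν ^ 3)) * ((1 - β₂) / β₂) *
            (‖g‖ ^ 2 + t * S ^ 2 - ν) = 0 → t = σsq) := by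
  have hedge : IsEdgeOfStability (γ * (1 - β₁)) S ν :=
    .of_eq_sq (mul_pos hγ (sub_pos.2 hβ₁.2)) hS (by rw [hν, mul_comm γ])
  obtain ⟨hpos, hiff⟩ :=
    sf_scalar_adam_central_flow_variance_general hγ.ne' hβ₁.2.ne hβ₂ hedge g nv
  exact ⟨hpos, (hiff σsq).2 hσsq, fun t ht ↦ ((hiff t).1 ht).trans hσsq.symm⟩
end

section
/- Let S > 0, γ > 0, β₂ ∈ (0,1), and let g, n ∈ ℝⁿ with ⟨n, -g⟩ ≥ 0. Define σ²(β₁) := [⟨n, -g⟩ + ((1-β₂)/β₂)(S²/4 - ‖g‖²/((1-β₁)²γ²))] / [(1/2)‖n‖² + ((1-β₂)/((1-β₁)²β₂γ²))S²] for β₁ ∈ [0,1). Then β₁ ↦ σ²(β₁) is strictly decreasing on [0,1); that is, larger momentum β₁ yields a smaller equilibrium oscillation variance along the hill direction for Schedule-Free Scalar Adam at the Edge of Stability. -/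
/-!
STATEMENT 14: The equilibrium oscillation variance
σ²(β₁) = [⟨n,-g⟩ + ((1-β₂)/β₂)(S²/4 - ‖g‖²/((1-β₁)²γ²))]
         / [(1/2)‖n‖² + ((1-β₂)/((1-β₁)²β₂γ²))S²]
of Schedule-Free Scalar Adam at the Edge of Stability is strictly decreasing in
the momentum parameter β₁ on [0,1), provided ⟨n, -g⟩ ≥ 0.
-/

open RealInnerProductSpace

/-!
As a function of the inverse squared effective step size `t = 1 / ((1 - β₁)² γ²)`, the variance is
linear fractional: with `k = (1 - β₂) / β₂` it equals
`(-k ‖g‖² t + (⟨n, -g⟩ + k S² / 4)) / (k S² t + ‖n‖² / 2)`.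
A linear fractional map of negative determinant is strictly decreasing wherever its denominator is
positive. The determinant here is `-k` times `‖g‖² ‖n‖² / 2 + (⟨n, -g⟩ + k S² / 4) S²`, and `t`
increases with `β₁`.
-/

section OrderedField

variable {K : Type*} [Field K] [LinearOrder K] [IsStrictOrderedRing K]

theorem strictAntiOn_linearFractional {a b c d : K} (hdet : a * d - b * c < 0) :
    StrictAntiOn (fun t ↦ (a * t + b) / (c * t + d)) {t | 0 < c * t + d} := by
  intro s hs t ht hst
  have cross_sub : (a * t + b) * (c * s + d) - (a * s + b) * (c * t + d) =
      (t - s) * (a * d - b * c) := by ring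
  have cross_neg : (t - s) * (a * d - b * c) < 0 := mul_neg_of_pos_of_neg (sub_pos.2 hst) hdet
  exact (div_lt_div_iff₀ ht hs).2 (sub_neg.1 (cross_sub ▸ cross_neg))

theorem strictMonoOn_inv_one_sub_sq_mul {c : K} (hc : 0 < c) :
    StrictMonoOn (fun β : K ↦ ((1 - β) ^ 2 * c)⁻¹) (Set.Iio 1) := by
  intro x _ y hy hxy
  have hy' : 0 < 1 - y := sub_pos.2 hy
  refine inv_strictAnti₀ (by positivity) ?_
  gcongr

end OrderedField

theorem sf_scalar_adam_variance_strictAnti_in_momentum_general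
    {E : Type*} [SeminormedAddCommGroup E] [InnerProductSpace ℝ E] {S γ β₂ : ℝ}
    (hγ : γ ≠ 0) (hβ₂ : β₂ ∈ Set.Ioo (0 : ℝ) 1) {g nv : E}
    (hdet : 0 < ‖g‖ ^ 2 * ‖nv‖ ^ 2 / 2 + (⟪nv, -g⟫ + (1 - β₂) / β₂ * (S ^ 2 / 4)) * S ^ 2)
    {σsq : ℝ → ℝ}
    (hσsq : ∀ β₁ : ℝ, σsq β₁ =
      (⟪nv, -g⟫ + ((1 - β₂) / β₂) * (S ^ 2 / 4 - ‖g‖ ^ 2 / ((1 - β₁) ^ 2 * γ ^ 2)))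
      / ((1 / 2) * ‖nv‖ ^ 2 + ((1 - β₂) / ((1 - β₁) ^ 2 * β₂ * γ ^ 2)) * S ^ 2)) :
    StrictAntiOn σsq (Set.Iio 1) := by
  set k := (1 - β₂) / β₂
  have k_pos : 0 < k := div_pos (sub_pos.2 hβ₂.2) hβ₂.1
  have linearFractional_det_neg :
      -(k * ‖g‖ ^ 2) * (‖nv‖ ^ 2 / 2) - (⟪nv, -g⟫ + k * (S ^ 2 / 4)) * (k * S ^ 2) < 0 := by
    linarith [mul_pos k_pos hdet]
  have denom_pos {t : ℝ} (ht : 0 < t) : 0 < k * S ^ 2 * t + ‖nv‖ ^ 2 / 2 := by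
    rcases eq_or_ne S 0 with rfl | hS
    · have nv_ne : ‖nv‖ ≠ 0 := fun h ↦ by simp [h] at hdet
      positivity
    · positivity
  have σsq_eq_linearFractional (β : ℝ) : σsq β =
      (-(k * ‖g‖ ^ 2) * ((1 - β) ^ 2 * γ ^ 2)⁻¹ + (⟪nv, -g⟫ + k * (S ^ 2 / 4))) /
        (k * S ^ 2 * ((1 - β) ^ 2 * γ ^ 2)⁻¹ + ‖nv‖ ^ 2 / 2) := by
    rw [hσsq, mul_right_comm _ β₂, div_mul_eq_div_div_swap (1 - β₂)]
    congr 1 <;> ring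
  rw [funext σsq_eq_linearFractional]
  refine (strictAntiOn_linearFractional linearFractional_det_neg).comp_strictMonoOn
    (strictMonoOn_inv_one_sub_sq_mul (by positivity)) fun β hβ ↦ denom_pos ?_
  have one_sub_pos : 0 < 1 - β := sub_pos.2 hβ
  positivity

theorem sf_scalar_adam_variance_strictAnti_in_momentum
    {d : ℕ} (S γ β₂ : ℝ)
    (hS : 0 < S) (hγ : 0 < γ) (hβ₂ : β₂ ∈ Set.Ioo (0 : ℝ) 1)
    (g nv : EuclideanSpace ℝ (Fin d))
    (hng : 0 ≤ ⟪nv, -g⟫)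
    (σsq : ℝ → ℝ)
    (hσsq : ∀ β₁ : ℝ, σsq β₁ =
      (⟪nv, -g⟫ + ((1 - β₂) / β₂) * (S ^ 2 / 4 - ‖g‖ ^ 2 / ((1 - β₁) ^ 2 * γ ^ 2)))
      / ((1 / 2) * ‖nv‖ ^ 2 + ((1 - β₂) / ((1 - β₁) ^ 2 * β₂ * γ ^ 2)) * S ^ 2)) :
    StrictAntiOn σsq (Set.Ico (0 : ℝ) 1) := by
  have hk : 0 < (1 - β₂) / β₂ := div_pos (sub_pos.2 hβ₂.2) hβ₂.1
  exact (sf_scalar_adam_variance_strictAnti_in_momentum_general hγ.ne' hβ₂ (by positivity)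
    hσsq).mono Set.Ico_subset_Iio_self
end

section
/- Let β ∈ [0,1), C > 0 with (1-β)C ≤ 1, and set c_t = (1-β)C/t for t ≥ 1. For 1 ≤ t ≤ T define the SF averaging weights α_t := [c_t / ((1-c_t)(1-β) + c_t)] · ∏_{s=t+1}^{T} [(1-c_s)(1-β) / ((1-c_s)(1-β) + c_s)]. Then these weights simplify exactly to α_t = (C/(t + βC)) · ∏_{s=t+1}^{T} (s - (1-β)C)/(s + βC). -/
/-!
Eliminating `z_t` from `x_t = (1 - c_t) x_{t-1} + c_t z_t` and `y_t = (1 - β) z_t + β x_t` gives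
`x_t = (1 - g_t) x_{t-1} + g_t y_t` with gain `g_t = c_t / ((1 - c_t) (1 - β) + c_t)`, so that
`α_t = g_t ∏_{s > t} (1 - g_s)`. For `c_t = (1 - β) C / t` the denominator of `g_t` is
`(1 - β) (t + β C) / t`; the factor `1 - β` cancels, leaving `g_t = C / (t + β C)`.
-/

section RefinedStep

variable {K : Type*} [Field K] {β C c t : K}

theorem refined_sf_denominator_eq (ht : t ≠ 0) (hc : c = (1 - β) * C / t) :
    (1 - c) * (1 - β) + c = (1 - β) / t * (t + β * C) := by
  rw [hc]
  field_simp
  ring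

theorem refined_sf_gain_eq (hβ : β ≠ 1) (ht : t ≠ 0) (hc : c = (1 - β) * C / t) :
    c / ((1 - c) * (1 - β) + c) = C / (t + β * C) := by
  have hscale : (1 - β) / t ≠ 0 := div_ne_zero (sub_ne_zero.mpr hβ.symm) ht
  calc c / ((1 - c) * (1 - β) + c)
      = (1 - β) / t * C / ((1 - β) / t * (t + β * C)) := by
        rw [refined_sf_denominator_eq ht hc, hc, mul_div_right_comm (1 - β) C t]
    _ = C / (t + β * C) := mul_div_mul_left _ _ hscale

theorem refined_sf_retention_eq (hβ : β ≠ 1) (ht : t ≠ 0) (hpole : t + β * C ≠ 0)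
    (hc : c = (1 - β) * C / t) :
    (1 - c) * (1 - β) / ((1 - c) * (1 - β) + c) = (t - (1 - β) * C) / (t + β * C) := by
  have hden : (1 - c) * (1 - β) + c ≠ 0 := by
    rw [refined_sf_denominator_eq ht hc]
    exact mul_ne_zero (div_ne_zero (sub_ne_zero.mpr hβ.symm) ht) hpole
  calc (1 - c) * (1 - β) / ((1 - c) * (1 - β) + c)
      = 1 - c / ((1 - c) * (1 - β) + c) := by rw [one_sub_div hden, add_sub_cancel_right]
    _ = 1 - C / (t + β * C) := by rw [refined_sf_gain_eq hβ ht hc]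
    _ = (t - (1 - β) * C) / (t + β * C) := by
        rw [one_sub_div hpole]
        ring

end RefinedStep

theorem refined_sf_weights_closed_form_general {K : Type*} [Field K] [CharZero K] {β C : K}
    (hβ : β ≠ 1) (hpole : ∀ t : ℕ, 1 ≤ t → (t : K) + β * C ≠ 0)
    {c : ℕ → K} (hc : ∀ t : ℕ, 1 ≤ t → c t = (1 - β) * C / (t : K))
    (T : ℕ) {t : ℕ} (ht : 1 ≤ t) :
    (c t / ((1 - c t) * (1 - β) + c t)) *
        ∏ s ∈ Finset.Icc (t + 1) T, ((1 - c s) * (1 - β) / ((1 - c s) * (1 - β) + c s))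
      = (C / ((t : K) + β * C)) *
        ∏ s ∈ Finset.Icc (t + 1) T, (((s : K) - (1 - β) * C) / ((s : K) + β * C)) := by
  have cast_ne_zero {s : ℕ} (hs : 1 ≤ s) : (s : K) ≠ 0 :=
    Nat.cast_ne_zero.mpr (Nat.one_le_iff_ne_zero.mp hs)
  rw [refined_sf_gain_eq hβ (cast_ne_zero ht) (hc t ht)]
  congr 1
  refine Finset.prod_congr rfl fun s hs ↦ ?_
  have hs_pos : 1 ≤ s := le_of_add_le_right (Finset.mem_Icc.mp hs).1
  exact refined_sf_retention_eq hβ (cast_ne_zero hs_pos) (hpole s hs_pos) (hc s hs_pos)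

theorem refined_sf_weights_closed_form
    (β C : ℝ) (hβ : β ∈ Set.Ico (0 : ℝ) 1) (hC : 0 < C)
    (hCβ : (1 - β) * C ≤ 1)
    (c : ℕ → ℝ) (hc : ∀ t : ℕ, 1 ≤ t → c t = (1 - β) * C / (t : ℝ)) :
    ∀ T t : ℕ, 1 ≤ t → t ≤ T →
      (c t / ((1 - c t) * (1 - β) + c t)) *
        ∏ s ∈ Finset.Icc (t + 1) T,
          ((1 - c s) * (1 - β) / ((1 - c s) * (1 - β) + c s))
      = (C / ((t : ℝ) + β * C)) *
          ∏ s ∈ Finset.Icc (t + 1) T,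
            (((s : ℝ) - (1 - β) * C) / ((s : ℝ) + β * C)) := by
  have hpole (t : ℕ) (ht : 1 ≤ t) : (t : ℝ) + β * C ≠ 0 :=
    (add_pos_of_pos_of_nonneg (Nat.cast_pos.mpr ht) (mul_nonneg hβ.1 hC.le)).ne'
  exact fun T _ ht _ ↦ refined_sf_weights_closed_form_general hβ.2.ne hpole hc T ht
end

section
/- Let β ∈ [0,1), C > 0 with (1-β)C ≤ 1, and set c_t = (1-β)C/t for t ≥ 1. For 1 ≤ t ≤ T let α_t := [c_t / ((1-c_t)(1-β) + c_t)] · ∏_{s=t+1}^{T} [(1-c_s)(1-β) / ((1-c_s)(1-β) + c_s)] be the SF averaging weights. Then for every fixed r ∈ (0,1], lim_{T→∞} T · α_{⌈rT⌉} = C · r^{C-1}; that is, the averaging weights asymptotically follow the power-law profile α_t ≈ (C/T)(t/T)^{C-1}, which depends only on the decoupling parameter C and not on β. -/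
/-!
STATEMENT 16: For the refined Schedule-Free method with c_t = (1-β)C/t, the
implicit averaging weights asymptotically follow the power-law profile
α_t ≈ (C/T)(t/T)^{C-1}: for every fixed r ∈ (0,1],
lim_{T→∞} T · α_{⌈rT⌉} = C · r^{C-1}, a limit depending only on C and not on β.
-/

open Filter

/-!
Since `c_s = (1-β)C/s`, the denominator `(1-c_s)(1-β) + c_s` equals `(1-β)(s+βC)/s`, so the weight
is exactly `C/(t+βC) · ∏_{t < s ≤ T} (s-(1-β)C)/(s+βC)`. The product is a quotient of Gamma values,
and Euler's limit formula, in the form `Γ(n+x) ~ Γ(n) n^x`, makes it asymptotic to `(T/t)^(-C)`: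
only the difference `C` of the two shifts survives, which is why `β` disappears.
-/

open Asymptotics Topology Real

theorem natCast_add_const_isEquivalent (x : ℝ) :
    (fun n : ℕ => (n : ℝ) + x) ~[atTop] fun n => (n : ℝ) :=
  IsEquivalent.refl.add_const_of_norm_tendsto_atTop
    (tendsto_norm_atTop_atTop.comp tendsto_natCast_atTop_atTop)

theorem eventually_natCast_add_pos (x : ℝ) : ∀ᶠ n : ℕ in atTop, 0 < (n : ℝ) + x :=
  (tendsto_atTop_add_const_right _ x tendsto_natCast_atTop_atTop).eventually_gt_atTop 0

theorem prod_Ico_natCast_add_eq_Gamma_div {m n : ℕ} {x : ℝ} (hmn : m ≤ n) (hm : 0 < (m : ℝ) + x) :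
    ∏ s ∈ Finset.Ico m n, ((s : ℝ) + x) = Gamma (n + x) / Gamma (m + x) := by
  induction n, hmn using Nat.le_induction with
  | base => simp [(Gamma_pos_of_pos hm).ne']
  | succ n hmn ih =>
    have hn : (n : ℝ) + x ≠ 0 := by
      have : (m : ℝ) ≤ n := mod_cast hmn
      linarith
    rw [Finset.prod_Ico_succ_top hmn, ih, Nat.cast_succ, add_right_comm, Gamma_add_one hn]
    ring

theorem GammaSeq_mul_natCast_add {x : ℝ} (hx : 0 < x) {n : ℕ} (hn : n ≠ 0) :
    GammaSeq x n * (n + x) = Gamma x * n * (Gamma n * n ^ x) / Gamma (n + x) := by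
  have hn0 : (n : ℝ) ≠ 0 := mod_cast hn
  have hnx : 0 < (n : ℝ) + x := by positivity
  have hprod : ∏ j ∈ Finset.range (n + 1), (x + j) = (n + x) * Gamma (n + x) / Gamma x := by
    simp_rw [add_comm x, Finset.range_eq_Ico]
    rw [prod_Ico_natCast_add_eq_Gamma_div (Nat.zero_le _) (by simpa using hx), Nat.cast_succ,
      add_right_comm, Gamma_add_one hnx.ne', Nat.cast_zero, zero_add]
  have hfact : (n.factorial : ℝ) = n * Gamma n := by
    rw [← Gamma_nat_eq_factorial, Gamma_add_one hn0]
  rw [GammaSeq, hprod, hfact]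
  field_simp

theorem Gamma_natCast_add_isEquivalent_of_pos {x : ℝ} (hx : 0 < x) :
    (fun n : ℕ => Gamma (n + x)) ~[atTop] fun n => Gamma n * (n : ℝ) ^ x := by
  have hΓ : Gamma x ≠ 0 := (Gamma_pos_of_pos hx).ne'
  have hseq : GammaSeq x ~[atTop] fun _ => Gamma x :=
    (isEquivalent_const_iff_tendsto hΓ).2 (GammaSeq_tendsto_Gamma x)
  have hquot := (IsEquivalent.refl (u := fun n : ℕ => Gamma x * n * (Gamma n * (n : ℝ) ^ x))).div
    (hseq.mul (natCast_add_const_isEquivalent x))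
  refine hquot.congr_left ?_ |>.congr_right ?_ <;>
    filter_upwards [eventually_ne_atTop 0] with n hn <;>
    have hn0 : (n : ℝ) ≠ 0 := mod_cast hn
  · rw [Pi.div_apply, Pi.mul_apply, GammaSeq_mul_natCast_add hx hn, div_div_cancel₀]
    positivity
  · exact mul_div_cancel_left₀ _ (mul_ne_zero hΓ hn0)

theorem Gamma_natCast_add_isEquivalent (x : ℝ) :
    (fun n : ℕ => Gamma (n + x)) ~[atTop] fun n => Gamma n * (n : ℝ) ^ x := by
  -- The functional equation carries the positive case down to every real shift, poles included.
  obtain ⟨k, hk⟩ := exists_nat_gt (-x)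
  induction k generalizing x with
  | zero => exact Gamma_natCast_add_isEquivalent_of_pos (by simpa using hk)
  | succ k ih =>
    have hshift := (ih (x + 1) (by push_cast at hk; linarith)).div
      (natCast_add_const_isEquivalent x)
    refine hshift.congr_left ?_ |>.congr_right ?_
    · filter_upwards [eventually_natCast_add_pos x] with n hn
      rw [Pi.div_apply, ← add_assoc, Gamma_add_one hn.ne', mul_div_cancel_left₀ _ hn.ne']
    · filter_upwards [eventually_ne_atTop 0] with n hn
      have hn0 : (n : ℝ) ≠ 0 := mod_cast hn
      rw [Pi.div_apply, rpow_add_one hn0]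
      field_simp

theorem Gamma_natCast_add_div_isEquivalent (x y : ℝ) :
    (fun n : ℕ => Gamma (n + x) / Gamma (n + y)) ~[atTop] fun n => (n : ℝ) ^ (x - y) := by
  refine ((Gamma_natCast_add_isEquivalent x).div (Gamma_natCast_add_isEquivalent y)).congr_right ?_
  filter_upwards [eventually_gt_atTop 0] with n hn
  have hn_pos : (0 : ℝ) < n := mod_cast hn
  rw [Pi.div_apply, mul_div_mul_left _ _ (Gamma_pos_of_pos hn_pos).ne', rpow_sub hn_pos]

theorem prod_Icc_add_div_add_isEquivalent {ι : Type*} {l : Filter ι} {m n : ι → ℕ}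
    (hm : Tendsto m l atTop) (hmn : ∀ᶠ i in l, m i ≤ n i) (x y : ℝ) :
    (fun i => ∏ s ∈ Finset.Icc (m i + 1) (n i), ((s : ℝ) + x) / (s + y)) ~[l]
      fun i => ((n i : ℝ) / m i) ^ (x - y) := by
  have hn : Tendsto n l atTop := tendsto_atTop_mono' l hmn hm
  have hΓ := Gamma_natCast_add_div_isEquivalent (1 + x) (1 + y)
  refine ((hΓ.comp_tendsto hn).div (hΓ.comp_tendsto hm)).congr_left ?_ |>.congr_right ?_
  · filter_upwards [hmn, hm.eventually (eventually_natCast_add_pos (1 + x)),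
      hm.eventually (eventually_natCast_add_pos (1 + y))] with i hi hx hy
    have hprod (z : ℝ) (hz : 0 < (m i : ℝ) + (1 + z)) :
        ∏ s ∈ Finset.Icc (m i + 1) (n i), ((s : ℝ) + z) =
          Gamma (n i + (1 + z)) / Gamma (m i + (1 + z)) := by
      rw [← Finset.Ico_add_one_right_eq_Icc,
        prod_Ico_natCast_add_eq_Gamma_div (Nat.add_le_add_right hi 1) (by push_cast; linarith)]
      simp only [Nat.cast_add, Nat.cast_one, add_assoc]
    rw [Finset.prod_div_distrib, hprod x hx, hprod y hy]
    exact div_div_div_comm _ _ _ _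
  · refine .of_forall fun i => ?_
    simp only [Pi.div_apply, Function.comp_apply, add_sub_add_left_eq_sub]
    exact (div_rpow (Nat.cast_nonneg _) (Nat.cast_nonneg _) _).symm

/-- The Schedule-Free averaging weight `α_t` of horizon `T`, for the momentum parameter `β` and the
averaging coefficients `c`. -/
noncomputable def sfWeight (β : ℝ) (c : ℕ → ℝ) (T t : ℕ) : ℝ :=
  c t / ((1 - c t) * (1 - β) + c t) *
    ∏ s ∈ Finset.Icc (t + 1) T, (1 - c s) * (1 - β) / ((1 - c s) * (1 - β) + c s)

section Refined

variable {β C : ℝ} {c : ℕ → ℝ}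

theorem sfWeight_eq_mul_prod (hβ : β ≠ 1) (hc : ∀ t : ℕ, 1 ≤ t → c t = (1 - β) * C / t)
    (T : ℕ) {t : ℕ} (ht : 1 ≤ t) :
    sfWeight β c T t =
      C / (t + β * C) *
        ∏ s ∈ Finset.Icc (t + 1) T, ((s : ℝ) + (β - 1) * C) / (s + β * C) := by
  have hβ' : 1 - β ≠ 0 := sub_ne_zero.2 hβ.symm
  have hcast {s : ℕ} (hs : 1 ≤ s) : (s : ℝ) ≠ 0 := mod_cast Nat.one_le_iff_ne_zero.1 hs
  have hscale {s : ℕ} (hs : 1 ≤ s) : (1 - β) / s ≠ 0 := div_ne_zero hβ' (hcast hs)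
  have hnum {s : ℕ} (hs : 1 ≤ s) :
      (1 - c s) * (1 - β) = (1 - β) / s * (s + (β - 1) * C) := by
    rw [hc s hs]
    field_simp [hcast hs]
    ring
  have hden {s : ℕ} (hs : 1 ≤ s) : (1 - c s) * (1 - β) + c s = (1 - β) / s * (s + β * C) := by
    rw [hnum hs, hc s hs]
    ring
  rw [sfWeight]
  congr 1
  · rw [hden ht, hc t ht, mul_div_right_comm, mul_div_mul_left _ _ (hscale ht)]
  · refine Finset.prod_congr rfl fun s hs => ?_
    have hs1 : 1 ≤ s := (Nat.le_add_left 1 t).trans (Finset.mem_Icc.1 hs).1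
    rw [hden hs1, hnum hs1, mul_div_mul_left _ _ (hscale hs1)]

theorem sfWeight_isEquivalent (hβ : β ≠ 1) (hc : ∀ t : ℕ, 1 ≤ t → c t = (1 - β) * C / t)
    {ι : Type*} {l : Filter ι} {T t : ι → ℕ} (ht : Tendsto t l atTop)
    (htT : ∀ᶠ i in l, t i ≤ T i) :
    (fun i => sfWeight β c (T i) (t i)) ~[l]
      fun i => C / T i * ((t i : ℝ) / T i) ^ (C - 1) := by
  have hlead : (fun i => C / ((t i : ℝ) + β * C)) ~[l] fun i => C / (t i : ℝ) :=
    IsEquivalent.refl.div ((natCast_add_const_isEquivalent (β * C)).comp_tendsto ht)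
  have hprod := prod_Icc_add_div_add_isEquivalent ht htT ((β - 1) * C) (β * C)
  refine (hlead.mul hprod).congr_left ?_ |>.congr_right ?_
  · filter_upwards [ht.eventually_ge_atTop 1] with i hi
    exact (sfWeight_eq_mul_prod hβ hc (T i) hi).symm
  · filter_upwards [ht.eventually_ge_atTop 1, htT] with i hi hiT
    have : (0 : ℝ) < t i := mod_cast hi
    have : (0 : ℝ) < T i := mod_cast hi.trans hiT
    have hexp : (β - 1) * C - β * C = -C := by ring
    rw [Pi.mul_apply, hexp, rpow_neg (by positivity), ← inv_rpow (by positivity), inv_div,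
      rpow_sub_one (by positivity)]
    field_simp

end Refined

theorem natCeil_mul_natCast_le {r : ℝ} (hr : r ≤ 1) (n : ℕ) : ⌈r * (n : ℝ)⌉₊ ≤ n :=
  Nat.ceil_le.2 (mul_le_of_le_one_left n.cast_nonneg hr)

theorem refined_sf_weights_power_law_limit_general
    (β C : ℝ) (hβ : β ≠ 1)
    (c : ℕ → ℝ) (hc : ∀ t : ℕ, 1 ≤ t → c t = (1 - β) * C / (t : ℝ))
    (τ : ℕ → ℕ) (hτ : ∀ᶠ T in atTop, τ T ≤ T) (r : ℝ) (hr : 0 < r)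
    (hτr : Tendsto (fun T : ℕ => (τ T : ℝ) / T) atTop (𝓝 r)) :
    Tendsto (fun T : ℕ => (T : ℝ) * sfWeight β c T (τ T)) atTop (𝓝 (C * r ^ (C - 1))) := by
  have hT : ∀ᶠ T : ℕ in atTop, (T : ℝ) ≠ 0 :=
    (eventually_ne_atTop 0).mono fun T h => Nat.cast_ne_zero.2 h
  have hτtop : Tendsto τ atTop atTop := by
    refine tendsto_natCast_atTop_iff.1 <|
      (hτr.pos_mul_atTop hr tendsto_natCast_atTop_atTop).congr' ?_
    filter_upwards [hT] with T h using div_mul_cancel₀ _ h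
  have hequiv : (fun T : ℕ => (T : ℝ) * sfWeight β c T (τ T)) ~[atTop]
      fun T => C * ((τ T : ℝ) / T) ^ (C - 1) := by
    refine (IsEquivalent.refl.mul (sfWeight_isEquivalent hβ hc hτtop hτ)).congr_right ?_
    filter_upwards [hT] with T h
    rw [Pi.mul_apply, ← mul_assoc, mul_div_cancel₀ _ h]
  exact hequiv.symm.tendsto_nhds ((hτr.rpow_const (.inl hr.ne')).const_mul C)

theorem refined_sf_weights_power_law_limit
    (β C : ℝ) (hβ : β ∈ Set.Ico (0 : ℝ) 1) (hC : 0 < C)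
    (hCβ : (1 - β) * C ≤ 1)
    (c : ℕ → ℝ) (hc : ∀ t : ℕ, 1 ≤ t → c t = (1 - β) * C / (t : ℝ))
    (α : ℕ → ℕ → ℝ)
    (hα : ∀ T t : ℕ, α T t =
      (c t / ((1 - c t) * (1 - β) + c t)) *
        ∏ s ∈ Finset.Icc (t + 1) T,
          ((1 - c s) * (1 - β) / ((1 - c s) * (1 - β) + c s))) :
    ∀ r : ℝ, r ∈ Set.Ioc (0 : ℝ) 1 →
      Tendsto (fun T : ℕ => (T : ℝ) * α T ⌈r * (T : ℝ)⌉₊) atTop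
        (nhds (C * r ^ (C - 1))) := by
  rintro r ⟨hr0, hr1⟩
  obtain rfl : α = sfWeight β c := funext₂ hα
  exact refined_sf_weights_power_law_limit_general β C hβ.2.ne c hc _
    (.of_forall (natCeil_mul_natCast_le hr1)) r hr0
    ((tendsto_nat_ceil_mul_div_atTop hr0.le).comp tendsto_natCast_atTop_atTop)
end
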